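/- Let L ≥ 1 and M ≥ 1 be integers and z_1,…,z_L ∈ ℝ; set m¹ = (1/L)∑ z_l and m² = (1/L)∑ z_l². If M + 2 + √M·m¹ ≥ 0 and m² + √M·m¹ − 1 ≤ 0, then the local log-likelihood ℓ(θ) = −L·log(1+θ) − (1/2)·∑_{l=1}^L ((z_l − √M·θ)/(1+θ))² is nonincreasing on [0,∞); in particular ℓ(θ) ≤ ℓ(0) for all θ ≥ 0, i.e., the constrained maximum likelihood estimate is 0. -/

import Mathlib

/-!
Up to the factor `L`, the log-likelihood depends on the data only through the moments `m¹` and `m²`,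
and its derivative is `-q(θ) / (1 + θ)³` with `q` the stationarity quadratic. The constant term of
`q` is nonnegative exactly when `m² + √M·m¹ ≤ 1`; as `(m¹)² ≤ m²`, this confines `m¹` to a range
on which the linear coefficient of `q` is nonnegative as well, so `q ≥ 0` on `[0, ∞)`.
-/

open Real Set
open scoped BigOperators

theorem sq_add_two_add_mul_nonneg {R : Type*} [CommRing R] [LinearOrder R] [IsStrictOrderedRing R]
    {a x : R} (h : x ^ 2 + a * x ≤ 1) : 0 ≤ a ^ 2 + 2 + a * x := by
  by_contra! hneg
  -- With `p = a * x < -(a² + 2)`, the bound `h` times `a²` reads `p * (p + a²) ≤ a²`,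
  -- whereas both factors are so negative that `p * (p + a²) > 2 * (a² + 2)`.
  have hupper : a * x * (a * x + a ^ 2) ≤ a ^ 2 := by
    linear_combination mul_le_mul_of_nonneg_left h (sq_nonneg a)
  have hlower : 2 * (a ^ 2 + 2) < a * x * (a * x + a ^ 2) := by
    nlinarith [sq_nonneg a]
  linarith [sq_nonneg a]

theorem sq_expect_le_expect_sq {ι K : Type*} [Field K] [LinearOrder K] [IsStrictOrderedRing K]
    (t : Finset ι) (f : ι → K) : (𝔼 i ∈ t, f i) ^ 2 ≤ 𝔼 i ∈ t, f i ^ 2 := by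
  simpa only [Finset.expect_eq_sum_div_card] using sum_div_card_sq_le_sum_sq_div_card

section MeanLogLik

/-- The log-likelihood per observation of the model `N(s·θ, (1 + θ)²)`, up to an additive constant,
as a function of the first and second empirical moments `m₁` and `m₂` of the data. The `√M` of the
paper is an arbitrary real number `s`. -/
noncomputable def meanLogLik (s m₁ m₂ θ : ℝ) : ℝ :=
  -log (1 + θ) - (1 / 2) * ((m₂ - 2 * s * θ * m₁ + (s * θ) ^ 2) / (1 + θ) ^ 2)

/-- The quadratic whose roots `θ ≠ -1` are the stationary points of `meanLogLik s m₁ m₂`. -/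
def stationarityQuadratic (s m₁ m₂ θ : ℝ) : ℝ :=
  θ ^ 2 + (s ^ 2 + 2 + s * m₁) * θ - (m₂ + s * m₁ - 1)

variable {s m₁ m₂ θ : ℝ}

theorem hasDerivAt_meanLogLik (hθ : 1 + θ ≠ 0) :
    HasDerivAt (meanLogLik s m₁ m₂) (-stationarityQuadratic s m₁ m₂ θ / (1 + θ) ^ 3) θ := by
  have hscale : HasDerivAt (fun x : ℝ ↦ 1 + x) 1 θ := (hasDerivAt_id θ).const_add 1
  have hmean : HasDerivAt (fun x : ℝ ↦ s * x) s θ := hasDerivAt_const_mul s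
  have hnum : HasDerivAt (fun x : ℝ ↦ m₂ - 2 * s * x * m₁ + (s * x) ^ 2)
      (-(2 * s * m₁) + 2 * (s * θ) * s) θ := by
    refine ((((hasDerivAt_const_mul (2 * s)).mul_const m₁).const_sub m₂).fun_add
      (hmean.fun_pow 2)).congr_deriv ?_
    simp
  have hden : HasDerivAt (fun x : ℝ ↦ (1 + x) ^ 2) (2 * (1 + θ)) θ := by
    simpa using hscale.fun_pow 2
  have hquot := hnum.fun_div hden (pow_ne_zero 2 hθ)
  refine ((hscale.log hθ).fun_neg.fun_sub (hquot.const_mul (1 / 2))).congr_deriv ?_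
  unfold stationarityQuadratic
  field_simp
  ring

theorem antitoneOn_meanLogLik_of_stationarityQuadratic_nonneg
    (h : ∀ θ, 0 ≤ θ → 0 ≤ stationarityQuadratic s m₁ m₂ θ) :
    AntitoneOn (meanLogLik s m₁ m₂) (Ici 0) := by
  have hderiv (θ : ℝ) (hθ : 0 ≤ θ) := hasDerivAt_meanLogLik (s := s) (m₁ := m₁) (m₂ := m₂)
    (show 1 + θ ≠ 0 by positivity)
  refine antitoneOn_of_hasDerivWithinAt_nonpos (convex_Ici 0)
    (fun θ hθ ↦ (hderiv θ hθ).continuousAt.continuousWithinAt)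
    (fun θ hθ ↦ (hderiv θ (interior_subset hθ)).hasDerivWithinAt) fun θ hθ ↦ ?_
  have hθ₀ : 0 ≤ θ := interior_subset hθ
  exact div_nonpos_of_nonpos_of_nonneg (neg_nonpos.2 (h θ hθ₀)) (by positivity)

theorem stationarityQuadratic_nonneg (hm : m₁ ^ 2 ≤ m₂) (hc : m₂ + s * m₁ ≤ 1) (hθ : 0 ≤ θ) :
    0 ≤ stationarityQuadratic s m₁ m₂ θ := by
  have hlinear : 0 ≤ (s ^ 2 + 2 + s * m₁) * θ :=
    mul_nonneg (sq_add_two_add_mul_nonneg (by linarith)) hθ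
  unfold stationarityQuadratic
  linarith [sq_nonneg θ]

end MeanLogLik

section LocalLogLik

variable {ι : Type*} [Fintype ι]

/-- The log-likelihood, up to an additive constant, of independent observations `z l` from
`N(s·θ, (1 + θ)²)`; the paper's `ℓ` is the case `s = √M`. -/
noncomputable def localLogLik (s : ℝ) (z : ι → ℝ) (θ : ℝ) : ℝ :=
  -(Fintype.card ι : ℝ) * log (1 + θ) - (1 / 2) * ∑ l, ((z l - s * θ) / (1 + θ)) ^ 2

theorem localLogLik_eq_card_mul_meanLogLik (s : ℝ) (z : ι → ℝ) (θ : ℝ) :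
    localLogLik s z θ = Fintype.card ι * meanLogLik s (𝔼 l, z l) (𝔼 l, z l ^ 2) θ := by
  have hsum : ∑ l, (z l - s * θ) ^ 2 =
      Fintype.card ι * (𝔼 l, z l ^ 2 - 2 * s * θ * 𝔼 l, z l + (s * θ) ^ 2) := by
    have hexpand (l : ι) : (z l - s * θ) ^ 2 = z l ^ 2 - 2 * s * θ * z l + (s * θ) ^ 2 := by ring
    simp only [hexpand, Finset.sum_add_distrib, Finset.sum_sub_distrib, ← Finset.mul_sum,
      Finset.sum_const, Finset.card_univ, nsmul_eq_mul, ← Fintype.card_mul_expect]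
    ring
  simp only [localLogLik, meanLogLik, div_pow, ← Finset.sum_div, hsum]
  ring

theorem local_loglik_antitone_general (s : ℝ) (z : ι → ℝ)
    (hc : 𝔼 l, z l ^ 2 + s * 𝔼 l, z l ≤ 1) : AntitoneOn (localLogLik s z) (Ici 0) := by
  have hmean : AntitoneOn (meanLogLik s (𝔼 l, z l) (𝔼 l, z l ^ 2)) (Ici 0) :=
    antitoneOn_meanLogLik_of_stationarityQuadratic_nonneg fun _ ↦
      stationarityQuadratic_nonneg (sq_expect_le_expect_sq _ z) hc
  intro a ha b hb hab
  simp only [localLogLik_eq_card_mul_meanLogLik]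
  exact mul_le_mul_of_nonneg_left (hmean ha hb hab) (Nat.cast_nonneg _)

end LocalLogLik

theorem local_loglik_antitone (L M : ℕ) (hL : 1 ≤ L) (hM : 1 ≤ M) (z : Fin L → ℝ)
    (m1 m2 : ℝ)
    (hm1 : m1 = (1 / (L : ℝ)) * ∑ l, z l)
    (hm2 : m2 = (1 / (L : ℝ)) * ∑ l, (z l) ^ 2)
    (hb : 0 ≤ (M : ℝ) + 2 + Real.sqrt M * m1)
    (hc : m2 + Real.sqrt M * m1 - 1 ≤ 0) :
    AntitoneOn
      (fun θ : ℝ => -(L : ℝ) * Real.log (1 + θ) -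
        (1 / 2) * ∑ l, ((z l - Real.sqrt M * θ) / (1 + θ)) ^ 2)
      (Set.Ici 0) ∧
    ∀ θ : ℝ, 0 ≤ θ →
      -(L : ℝ) * Real.log (1 + θ) -
          (1 / 2) * ∑ l, ((z l - Real.sqrt M * θ) / (1 + θ)) ^ 2 ≤
        -(L : ℝ) * Real.log (1 + 0) -
          (1 / 2) * ∑ l, ((z l - Real.sqrt M * 0) / (1 + 0)) ^ 2 := by
  have hanti := local_loglik_antitone_general (√M) z <| by
    simpa [Fintype.expect_eq_sum_div_card, hm1, hm2, div_eq_inv_mul] using hc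
  simp only [AntitoneOn, localLogLik, Fintype.card_fin] at hanti
  exact ⟨hanti, fun θ hθ ↦ hanti self_mem_Ici hθ hθ⟩
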